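/- Every stationary point of the trimmed-lasso objective F2_λ(x) = (1/2)‖Ax − y‖₂² + λ τ_k(x) is a local minimum of F2_λ. That is, if x̃ ∈ ℝ^d is such that for every direction v ∈ ℝ^d the directional derivative ∇_v F2_λ(x̃) = lim_{t↓0} (F2_λ(x̃ + t v) − F2_λ(x̃))/t exists and is nonnegative, then x̃ is a local minimum of F2_λ. -/

import Mathlib

open Finset Filter Topology

/-- Euclidean (ℓ₂) norm of a vector in ℝ^m. -/
noncomputable def l2norm {m : ℕ} (v : Fin m → ℝ) : ℝ := Real.sqrt (∑ i, v i ^ 2)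

/-- The trimmed lasso penalty: the minimum, over index sets Λ of size d − k,
of the ℓ₁ norm of x restricted to Λ. -/
noncomputable def tauTL {d : ℕ} (k : ℕ) (x : Fin d → ℝ) : ℝ :=
  sInf ((fun Λ : Finset (Fin d) => ∑ i ∈ Λ, |x i|) '' {Λ : Finset (Fin d) | Λ.card = d - k})

/-- The power-2 trimmed-lasso objective F2_λ(x) = (1/2)‖Ax − y‖₂² + λ τ_k(x). -/
noncomputable def F2obj {n d : ℕ} (A : Matrix (Fin n) (Fin d) ℝ) (y : Fin n → ℝ)
    (k : ℕ) (lam : ℝ) (x : Fin d → ℝ) : ℝ :=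
  (1 / 2) * (l2norm (A.mulVec x - y)) ^ 2 + lam * tauTL k x

/-- If `f` lies below a convex function `g` and touches it at `x`, and all one-sided directional
derivatives of `f` at `x` exist and are nonnegative, then `x` is a global minimum of `g`. -/
theorem ConvexOn.le_of_stationary_minorant {E : Type*} [AddCommGroup E] [Module ℝ E]
    {f g : E → ℝ} {x : E} (hg : ConvexOn ℝ Set.univ g) (hfg : ∀ z, f z ≤ g z) (hx : f x = g x)
    (hstat : ∀ v : E, ∃ L : ℝ, 0 ≤ L ∧
      Tendsto (fun t : ℝ => (f (x + t • v) - f x) / t) (𝓝[>] 0) (𝓝 L)) (z : E) :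
    g x ≤ g z := by
  obtain ⟨L, hL, hlim⟩ := hstat (z - x)
  suffices h : L ≤ g z - g x by linarith
  refine le_of_tendsto hlim ?_
  filter_upwards [Ioo_mem_nhdsGT (zero_lt_one' ℝ)] with t ht
  rw [div_le_iff₀ ht.1]
  have hconv := hg.2 (Set.mem_univ x) (Set.mem_univ z) (sub_nonneg.2 ht.2.le) ht.1.le
    (sub_add_cancel 1 t)
  have hpt : (1 - t) • x + t • z = x + t • (z - x) := by module
  rw [hpt] at hconv
  simp only [smul_eq_mul] at hconv
  linarith [hfg (x + t • (z - x))]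

/-- A stationary point of a pointwise minimum of finitely many continuous convex functions is a
local minimum. -/
theorem isLocalMin_of_stationary_of_finite_convex {E ι : Type*} [AddCommGroup E] [Module ℝ E]
    [TopologicalSpace E] {f : E → ℝ} {g : ι → E → ℝ} {s : Set ι} (hs : s.Finite)
    (hconv : ∀ i ∈ s, ConvexOn ℝ Set.univ (g i)) (hcont : ∀ i ∈ s, Continuous (g i))
    (hle : ∀ i ∈ s, ∀ z, f z ≤ g i z) (hex : ∀ z, ∃ i ∈ s, f z = g i z) {x : E}
    (hstat : ∀ v : E, ∃ L : ℝ, 0 ≤ L ∧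
      Tendsto (fun t : ℝ => (f (x + t • v) - f x) / t) (𝓝[>] 0) (𝓝 L)) :
    IsLocalMin f x := by
  have hev : ∀ᶠ z in 𝓝 x, ∀ i ∈ s, f x ≤ g i z := by
    refine (eventually_all_finite hs).2 fun i hi => ?_
    rcases (hle i hi x).eq_or_lt with heq | hlt
    · exact Eventually.of_forall fun z => heq.trans_le
        ((hconv i hi).le_of_stationary_minorant (hle i hi) heq hstat z)
    · exact ((hcont i hi).continuousAt.eventually_const_lt hlt).mono fun z hz => hz.le
  filter_upwards [hev] with z hz
  obtain ⟨i, hi, heq⟩ := hex z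
  exact (hz i hi).trans_eq heq.symm

theorem l2norm_sq {m : ℕ} (v : Fin m → ℝ) : l2norm v ^ 2 = ∑ i, v i ^ 2 :=
  Real.sq_sqrt (Finset.sum_nonneg fun i _ => sq_nonneg (v i))

theorem tauTL_le {d k : ℕ} (x : Fin d → ℝ) {Λ : Finset (Fin d)} (hΛ : Λ.card = d - k) :
    tauTL k x ≤ ∑ i ∈ Λ, |x i| :=
  csInf_le ((Set.toFinite _).image _).bddBelow (Set.mem_image_of_mem _ hΛ)

theorem exists_tauTL_eq {d : ℕ} (k : ℕ) (x : Fin d → ℝ) :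
    ∃ Λ : Finset (Fin d), Λ.card = d - k ∧ tauTL k x = ∑ i ∈ Λ, |x i| := by
  have hne : {Λ : Finset (Fin d) | Λ.card = d - k}.Nonempty := by
    obtain ⟨Λ, -, hΛ⟩ := Finset.exists_subset_card_eq
      (s := (Finset.univ : Finset (Fin d))) (n := d - k) (by simp)
    exact ⟨Λ, hΛ⟩
  obtain ⟨Λ, hΛ, heq⟩ := (hne.image fun Λ => ∑ i ∈ Λ, |x i|).csInf_mem
    ((Set.toFinite _).image _)
  exact ⟨Λ, hΛ, heq.symm⟩

/-- Least squares with an `ℓ₁` penalty on the coordinates in `Λ`. -/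
noncomputable def partialLasso {n d : ℕ} (A : Matrix (Fin n) (Fin d) ℝ) (y : Fin n → ℝ)
    (lam : ℝ) (Λ : Finset (Fin d)) (x : Fin d → ℝ) : ℝ :=
  (1 / 2) * (∑ j, (A.mulVec x - y) j ^ 2) + lam * ∑ i ∈ Λ, |x i|

theorem continuous_partialLasso {n d : ℕ} (A : Matrix (Fin n) (Fin d) ℝ) (y : Fin n → ℝ)
    (lam : ℝ) (Λ : Finset (Fin d)) : Continuous (partialLasso A y lam Λ) := by
  unfold partialLasso
  simp only [Pi.sub_apply, Matrix.mulVec, dotProduct]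
  fun_prop

theorem convexOn_partialLasso {n d : ℕ} (A : Matrix (Fin n) (Fin d) ℝ) (y : Fin n → ℝ)
    {lam : ℝ} (hlam : 0 ≤ lam) (Λ : Finset (Fin d)) :
    ConvexOn ℝ Set.univ (partialLasso A y lam Λ) := by
  refine ⟨convex_univ, fun x _ z _ a b ha hb hab => ?_⟩
  have hsq : ∑ j, (A.mulVec (a • x + b • z) - y) j ^ 2 ≤
      a * ∑ j, (A.mulVec x - y) j ^ 2 + b * ∑ j, (A.mulVec z - y) j ^ 2 := by
    rw [Finset.mul_sum, Finset.mul_sum, ← Finset.sum_add_distrib]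
    refine Finset.sum_le_sum fun j _ => ?_
    have hj : (A.mulVec (a • x + b • z) - y) j =
        a * (A.mulVec x - y) j + b * (A.mulVec z - y) j := by
      simp only [Matrix.mulVec_add, Matrix.mulVec_smul, Pi.sub_apply, Pi.add_apply,
        Pi.smul_apply, smul_eq_mul]
      linear_combination y j * hab
    rw [hj]
    exact (even_two.convexOn_pow (𝕜 := ℝ)).2 (Set.mem_univ _) (Set.mem_univ _) ha hb hab
  have habs : ∑ i ∈ Λ, |(a • x + b • z) i| ≤ a * ∑ i ∈ Λ, |x i| + b * ∑ i ∈ Λ, |z i| := by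
    rw [Finset.mul_sum, Finset.mul_sum, ← Finset.sum_add_distrib]
    refine Finset.sum_le_sum fun i _ => (abs_add_le _ _).trans_eq ?_
    simp [abs_mul, abs_of_nonneg ha, abs_of_nonneg hb]
  simp only [partialLasso, smul_eq_mul]
  linarith [mul_le_mul_of_nonneg_left habs hlam]

/-- Every stationary point of F2_λ (a point at which every one-sided
directional derivative exists and is nonnegative) is a local minimum of F2_λ. -/
theorem stmt11 {n d : ℕ} (k : ℕ) (hk : 0 < k) (hkd : k < d)
    (A : Matrix (Fin n) (Fin d) ℝ) (y : Fin n → ℝ) (lam : ℝ) (hlam : 0 < lam)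
    (xt : Fin d → ℝ)
    (hstat : ∀ v : Fin d → ℝ, ∃ L : ℝ, 0 ≤ L ∧
      Tendsto (fun t : ℝ => (F2obj A y k lam (xt + t • v) - F2obj A y k lam xt) / t)
        (nhdsWithin 0 (Set.Ioi 0)) (nhds L)) :
    IsLocalMin (F2obj A y k lam) xt := by
  refine isLocalMin_of_stationary_of_finite_convex (g := partialLasso A y lam)
    (Set.toFinite {Λ : Finset (Fin d) | Λ.card = d - k})
    (fun Λ _ => convexOn_partialLasso A y hlam.le Λ)
    (fun Λ _ => continuous_partialLasso A y lam Λ) (fun Λ hΛ z => ?_) (fun z => ?_) hstat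
  · rw [F2obj, l2norm_sq, partialLasso]
    gcongr
    exact tauTL_le z hΛ
  · obtain ⟨Λ, hΛ, heq⟩ := exists_tauTL_eq k z
    exact ⟨Λ, hΛ, by rw [F2obj, l2norm_sq, partialLasso, heq]⟩
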